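/- Let G_M(g) be the presented group with generators σ_1,…,σ_g and defining relations: σ_kσ_j = σ_jσ_k for |k−j| > 1; σ_jσ_{j+1}σ_j = σ_{j+1}σ_jσ_{j+1} for j = 1,…,g−1; σ_1σ_2⋯σ_{g−1}σ_g²σ_{g−1}⋯σ_2σ_1 = 1; and (σ_1σ_2⋯σ_g)^{g+1} = 1. Let p : G_M(g) → Sym({1,…,g+1}) be the homomorphism sending σ_i to the transposition (i, i+1) (the relations are satisfied in the symmetric group, so p is well defined). Then for g ≥ 3 the natural homomorphism G_A(g) → G_M(g) sending σ_i to σ_i for i = 1,…,g−1 is injective, and its image equals the preimage p^{−1}(Stab(g+1)) of the stabilizer of the point g+1; in particular this image is a subgroup of index g+1 in G_M(g). -/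

import Mathlib

open FreeGroup in
/-- Relations (A1)-(A3) of the group `G_A(g)`.
Index `i : Fin (g-1)` corresponds to the generator `σ_{i+1}`. -/
def relsA (g : ℕ) : Set (FreeGroup (Fin (g-1))) :=
  {r | ∃ j k : Fin (g-1), ((j : ℕ) + 1 < k ∨ (k : ℕ) + 1 < j) ∧
        r = of k * of j * (of j * of k)⁻¹} ∪
  {r | ∃ j k : Fin (g-1), (j : ℕ) + 1 = k ∧
        r = of j * of k * of j * (of k * of j * of k)⁻¹} ∪
  {(List.ofFn (fun i : Fin (g-1) => of i)).prod ^ g}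

/-- `G_A(g)`. -/
def GA (g : ℕ) : Type := PresentedGroup (relsA g)

instance (g : ℕ) : Group (GA g) := by unfold GA; infer_instance

open FreeGroup in
/-- Magnus' relations for the mapping class group of the `(g+1)`-punctured sphere.
Index `i : Fin g` corresponds to the generator `σ_{i+1}`. The third relation is
`σ_1 ⋯ σ_{g-1} σ_g² σ_{g-1} ⋯ σ_1 = (σ_1 ⋯ σ_g)(σ_g ⋯ σ_1) = 1`. -/
def relsM (g : ℕ) : Set (FreeGroup (Fin g)) :=
  {r | ∃ j k : Fin g, ((j : ℕ) + 1 < k ∨ (k : ℕ) + 1 < j) ∧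
        r = of k * of j * (of j * of k)⁻¹} ∪
  {r | ∃ j k : Fin g, (j : ℕ) + 1 = k ∧
        r = of j * of k * of j * (of k * of j * of k)⁻¹} ∪
  {(List.ofFn (fun i : Fin g => of i)).prod *
      ((List.ofFn (fun i : Fin g => of i)).reverse).prod} ∪
  {(List.ofFn (fun i : Fin g => of i)).prod ^ (g+1)}

/-- `G_M(g)`, Magnus' presentation of the mapping class group of the `(g+1)`-punctured
sphere. -/
def GM (g : ℕ) : Type := PresentedGroup (relsM g)

instance (g : ℕ) : Group (GM g) := by unfold GM; infer_instance

/-!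
Let `w = σ_1 ⋯ σ_g`, the rotation of the punctures. Since `w` has order dividing `g + 1`, and
conjugation by it shifts the generators, Magnus' group is generated by `w` and `t = w⁻¹ σ_1 w`,
and its relations follow from a short list of relations between these two elements.

The elements `w ^ (k + 1)`, `0 ≤ k ≤ g`, represent the left cosets of the image of `G_A(g)`: left
multiplication by `w` permutes the sets `w ^ (k + 1) G_A(g)` cyclically, and left multiplication by
`t` exchanges two of them, up to explicit elements of `G_A(g)`. Reading these formulas as
permutations of `{0, …, g} × G_A(g)`, one checks the relations between `w` and `t` using only those
of `G_A(g)`. The resulting action of `G_M(g)` restricts on the last fibre to the left regular action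
of `G_A(g)`, so `G_A(g) → G_M(g)` is injective; its first component is `p`. The map
`(k, h) ↦ w ^ (k + 1) h` intertwines it with left multiplication, so an element `γ` for which `p(γ)`
fixes the last point sends the base point `1` into the image of `G_A(g)`, and thus lies there.
-/

section BraidSequences

theorem list_ofFn_eq_map_range {α : Type*} (s : ℕ → α) (n : ℕ) :
    List.ofFn (fun i : Fin n => s i) = (List.range n).map s := by
  rw [List.ofFn_eq_map, ← List.map_coe_finRange_eq_range, List.map_map]
  rfl

variable {G H : Type*} [Group G] [Group H] {s : ℕ → G} {n : ℕ}

/-- The first `n` terms of the sequence `s` satisfy Artin's braid relations. Only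
`s 0, …, s (n - 1)` matter; sequences indexed by `ℕ` avoid coercions
between the index types `Fin n`. -/
structure IsBraidSeq (s : ℕ → G) (n : ℕ) : Prop where
  comm : ∀ ⦃i j⦄, i + 1 < j → j < n → s i * s j = s j * s i
  braid : ∀ ⦃i⦄, i + 1 < n → s i * s (i + 1) * s i = s (i + 1) * s i * s (i + 1)

/-- The product `s 0 * ⋯ * s (n - 1)`, whose power `n + 1` is a relator of `GA (n + 1)` and
`GM n`. -/
def ascProd (s : ℕ → G) (n : ℕ) : G := ((List.range n).map s).prod

/-- The product `s (n - 1) * ⋯ * s 0`, the second factor of the sphere relation of `GM n`. -/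
def descProd (s : ℕ → G) (n : ℕ) : G := ((List.range n).map s).reverse.prod

@[simp]
theorem ascProd_zero (s : ℕ → G) : ascProd s 0 = 1 := rfl

@[simp]
theorem descProd_zero (s : ℕ → G) : descProd s 0 = 1 := rfl

theorem ascProd_succ (s : ℕ → G) (n : ℕ) : ascProd s (n + 1) = ascProd s n * s n := by
  simp [ascProd, List.range_succ]

theorem descProd_succ (s : ℕ → G) (n : ℕ) : descProd s (n + 1) = s n * descProd s n := by
  simp [descProd, List.range_succ]

theorem map_ascProd (f : G →* H) (s : ℕ → G) (n : ℕ) :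
    f (ascProd s n) = ascProd (fun i => f (s i)) n := by
  simp [ascProd, map_list_prod, Function.comp_def]

theorem map_descProd (f : G →* H) (s : ℕ → G) (n : ℕ) :
    f (descProd s n) = descProd (fun i => f (s i)) n := by
  simp [descProd, map_list_prod, Function.comp_def]

theorem ascProd_congr {t : ℕ → G} (h : ∀ i < n, s i = t i) : ascProd s n = ascProd t n := by
  rw [ascProd, ascProd, List.map_congr_left fun i hi => h i (List.mem_range.mp hi)]

theorem descProd_congr {t : ℕ → G} (h : ∀ i < n, s i = t i) : descProd s n = descProd t n := by
  rw [descProd, descProd, List.map_congr_left fun i hi => h i (List.mem_range.mp hi)]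

theorem ascProd_op (s : ℕ → G) (n : ℕ) :
    ascProd (fun i => MulOpposite.op (s i)) n = MulOpposite.op (descProd s n) := by
  induction n with
  | zero => simp
  | succ n ih => rw [ascProd_succ, descProd_succ, ih, MulOpposite.op_mul]

theorem descProd_op (s : ℕ → G) (n : ℕ) :
    descProd (fun i => MulOpposite.op (s i)) n = MulOpposite.op (ascProd s n) := by
  induction n with
  | zero => simp
  | succ n ih => rw [descProd_succ, ascProd_succ, ih, MulOpposite.op_mul]

namespace IsBraidSeq

theorem op (h : IsBraidSeq s n) : IsBraidSeq (fun i => MulOpposite.op (s i)) n where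
  comm i j hij hj := by simp only [← MulOpposite.op_mul, h.comm hij hj]
  braid i hi := by simp only [← MulOpposite.op_mul, ← mul_assoc, h.braid hi]

theorem mono (h : IsBraidSeq s n) {k : ℕ} (hk : k ≤ n) : IsBraidSeq s k where
  comm _ _ hij hj := h.comm hij (hj.trans_le hk)
  braid _ hi := h.braid (hi.trans_le hk)

theorem ascProd_mul_of_lt (h : IsBraidSeq s n) {k i : ℕ} (hk : k < i) (hi : i < n) :
    ascProd s k * s i = s i * ascProd s k := by
  induction k with
  | zero => simp
  | succ k ih => rw [ascProd_succ, mul_assoc, h.comm hk hi, ← mul_assoc, ih (by lia), mul_assoc]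

theorem ascProd_mul (h : IsBraidSeq s n) {i : ℕ} (hi : i + 1 < n) :
    ascProd s n * s i = s (i + 1) * ascProd s n := by
  induction n with
  | zero => lia
  | succ n ih =>
    rcases (Nat.le_of_lt_succ hi).lt_or_eq with hin | rfl
    · rw [ascProd_succ, mul_assoc, ← h.comm hin n.lt_succ_self, ← mul_assoc,
        ih (h.mono n.le_succ) hin, mul_assoc]
    · calc ascProd s (i + 1 + 1) * s i
          = ascProd s i * (s i * s (i + 1) * s i) := by simp only [ascProd_succ, mul_assoc]
        _ = ascProd s i * s (i + 1) * (s i * s (i + 1)) := by simp only [h.braid hi, mul_assoc]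
        _ = s (i + 1) * ascProd s (i + 1 + 1) := by
            rw [h.ascProd_mul_of_lt i.lt_succ_self hi]
            simp only [ascProd_succ, mul_assoc]

theorem descProd_mul (h : IsBraidSeq s n) {i : ℕ} (hi : i + 1 < n) :
    descProd s n * s (i + 1) = s i * descProd s n := by
  have hop := h.op.ascProd_mul hi
  rw [ascProd_op, ← MulOpposite.op_mul, ← MulOpposite.op_mul] at hop
  exact (MulOpposite.op_injective hop).symm

theorem ascProd_pow_mul (h : IsBraidSeq s n) {i k : ℕ} (hik : i + k < n) :
    ascProd s n ^ k * s i = s (i + k) * ascProd s n ^ k := by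
  induction k with
  | zero => simp
  | succ k ih =>
    rw [pow_succ', mul_assoc, ih (by lia), ← mul_assoc, h.ascProd_mul (i := i + k) hik, mul_assoc,
      add_assoc]

theorem descProd_pow_mul (h : IsBraidSeq s n) {i k : ℕ} (hik : i + k < n) :
    descProd s n ^ k * s (i + k) = s i * descProd s n ^ k := by
  have hop := h.op.ascProd_pow_mul hik
  rw [ascProd_op, ← MulOpposite.op_pow, ← MulOpposite.op_mul, ← MulOpposite.op_mul] at hop
  exact (MulOpposite.op_injective hop).symm

theorem ascProd_mul_descProd (h : IsBraidSeq s n) {k : ℕ} (hk : k < n) :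
    ascProd s n * descProd s k = descProd s (k + 1) * (s 0)⁻¹ * ascProd s n := by
  induction k with
  | zero => simp [descProd_succ]
  | succ k ih =>
    rw [descProd_succ s k, ← mul_assoc, h.ascProd_mul hk, mul_assoc, ih (by lia),
      descProd_succ s (k + 1)]
    simp only [mul_assoc]

theorem ascProd_succ_pow_mul_descProd (h : IsBraidSeq s (n + 1)) {k l : ℕ} (hkl : k + l = n + 1) :
    ascProd s (n + 1) ^ k * descProd s l = ascProd s n ^ k * descProd s (n + 1) := by
  induction k generalizing l with
  | zero => simp [← hkl]
  | succ k ih =>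
    calc ascProd s (n + 1) ^ (k + 1) * descProd s l
        = ascProd s (n + 1) ^ k * descProd s (l + 1) * (s 0)⁻¹ * ascProd s (n + 1) := by
          rw [pow_succ, mul_assoc, h.ascProd_mul_descProd (by lia)]
          simp only [mul_assoc]
      _ = ascProd s n ^ k * (descProd s (n + 1) * (s 0)⁻¹ * ascProd s (n + 1)) := by
          rw [ih (by lia)]
          simp only [mul_assoc]
      _ = ascProd s n ^ (k + 1) * descProd s (n + 1) := by
          rw [← h.ascProd_mul_descProd n.lt_succ_self, ascProd_succ, descProd_succ, pow_succ]
          simp only [mul_assoc]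

theorem ascProd_succ_pow (h : IsBraidSeq s (n + 1)) :
    ascProd s (n + 1) ^ (n + 1) = ascProd s n ^ (n + 1) * descProd s (n + 1) := by
  simpa using h.ascProd_succ_pow_mul_descProd (add_zero (n + 1))

theorem descProd_succ_pow (h : IsBraidSeq s (n + 1)) :
    descProd s (n + 1) ^ (n + 1) = ascProd s (n + 1) * descProd s n ^ (n + 1) := by
  have hop := h.op.ascProd_succ_pow
  simp only [ascProd_op, descProd_op, ← MulOpposite.op_mul, ← MulOpposite.op_pow] at hop
  exact MulOpposite.op_injective hop

-- Both sides are the full twist, the square of Garside's half twist.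
theorem ascProd_pow_eq_descProd_pow (h : IsBraidSeq s n) :
    ascProd s n ^ (n + 1) = descProd s n ^ (n + 1) := by
  induction n with
  | zero => simp
  | succ n ih =>
    rw [pow_succ', h.ascProd_succ_pow, pow_succ (descProd s (n + 1)), h.descProd_succ_pow,
      ih (h.mono n.le_succ), mul_assoc]

theorem inv_ascProd_sq_mul (h : IsBraidSeq s (n + 1)) (hpow : ascProd s (n + 1) ^ (n + 2) = 1) :
    (ascProd s (n + 1) ^ 2)⁻¹ * s 0 = s n * (ascProd s (n + 1) ^ 2)⁻¹ := by
  rw [inv_eq_of_mul_eq_one_left ((pow_add _ n 2).symm.trans hpow),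
    h.ascProd_pow_mul (by lia), zero_add]

theorem inv_descProd_sq_mul (h : IsBraidSeq s (n + 1)) (hpow : descProd s (n + 1) ^ (n + 2) = 1) :
    (descProd s (n + 1) ^ 2)⁻¹ * s n = s 0 * (descProd s (n + 1) ^ 2)⁻¹ := by
  rw [inv_eq_of_mul_eq_one_left ((pow_add _ n 2).symm.trans hpow)]
  simpa using h.descProd_pow_mul (i := 0) (k := n) (by lia)

end IsBraidSeq

end BraidSequences

section RotationPairs

variable {G H : Type*} [Group G] [Group H] {g : ℕ} {w t : G}

/-- The relations of Magnus' group in terms of two generators: the rotation `w = σ_1 ⋯ σ_g` of the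
`g + 1` punctures and the half twist `t = w⁻¹ σ_1 w`, which exchanges the last puncture with the
first one. -/
structure IsRotationPair (g : ℕ) (w t : G) : Prop where
  rot_pow : w ^ (g + 1) = 1
  rot_mul_pow : (w * t) ^ g = 1
  inv_rot_mul_pow : (w⁻¹ * t) ^ g = 1
  comm : ∀ ⦃k⦄, 2 ≤ k → k < g → Commute t (w ^ k * t * (w ^ k)⁻¹)
  braid : 2 ≤ g → t * (w * t * w⁻¹) * t = w * t * w⁻¹ * t * (w * t * w⁻¹)

/-- The conjugates `w t w⁻¹, w² t w⁻², …`, which are the Artin generators when `(w, t)` is a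
rotation pair. -/
def rotConj (w t : G) (i : ℕ) : G := w ^ (i + 1) * t * (w ^ (i + 1))⁻¹

theorem ascProd_rotConj (w t : G) (n : ℕ) :
    ascProd (rotConj w t) n = (w * t) ^ n * (w ^ n)⁻¹ := by
  induction n with
  | zero => simp
  | succ n ih => rw [ascProd_succ, ih, rotConj, pow_succ (w * t), pow_succ w]; group

theorem descProd_rotConj (w t : G) (n : ℕ) :
    descProd (rotConj w t) n = w ^ (n + 1) * (w⁻¹ * t) ^ n * w⁻¹ := by
  induction n with
  | zero => simp
  | succ n ih =>
    rw [descProd_succ, ih, rotConj, pow_succ' (w⁻¹ * t), pow_succ w (n + 1)]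
    simp only [mul_assoc, inv_mul_cancel_left, mul_inv_cancel_left]

namespace IsRotationPair

theorem map (h : IsRotationPair g w t) (f : G →* H) : IsRotationPair g (f w) (f t) where
  rot_pow := by rw [← map_pow, h.rot_pow, map_one]
  rot_mul_pow := by rw [← map_mul, ← map_pow, h.rot_mul_pow, map_one]
  inv_rot_mul_pow := by rw [← map_inv, ← map_mul, ← map_pow, h.inv_rot_mul_pow, map_one]
  comm k hk hkg := by simpa using (h.comm hk hkg).map f
  braid hg := by simpa using congrArg f (h.braid hg)

theorem ascProd_rotConj (h : IsRotationPair g w t) : ascProd (rotConj w t) g = w := by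
  rw [_root_.ascProd_rotConj, h.rot_mul_pow, one_mul]
  exact inv_eq_of_mul_eq_one_right (by rw [← pow_succ, h.rot_pow])

theorem descProd_rotConj (h : IsRotationPair g w t) : descProd (rotConj w t) g = w⁻¹ := by
  rw [_root_.descProd_rotConj, h.inv_rot_mul_pow, h.rot_pow, one_mul, one_mul]

theorem isBraidSeq_rotConj (h : IsRotationPair g w t) : IsBraidSeq (rotConj w t) g where
  comm i j hij hj := by
    obtain ⟨k, rfl⟩ : ∃ k, j = i + k := ⟨j - i, by lia⟩
    have hconj : rotConj w t (i + k)
        = w ^ (i + 1) * (w ^ k * t * (w ^ k)⁻¹) * (w ^ (i + 1))⁻¹ := by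
      rw [rotConj, add_right_comm, pow_add]; group
    rw [hconj, rotConj]
    exact ((h.comm (by lia) (by lia)).conj (w ^ (i + 1))).eq
  braid i hi := by
    have hconj : rotConj w t (i + 1) = w ^ (i + 1) * (w * t * w⁻¹) * (w ^ (i + 1))⁻¹ := by
      rw [rotConj, pow_succ w (i + 1)]; group
    rw [hconj, rotConj]
    simpa using congrArg (fun x => w ^ (i + 1) * x * (w ^ (i + 1))⁻¹) (h.braid (by lia))

end IsRotationPair

end RotationPairs

section MonomialRotationPair

section FibrePoint

variable {α : Type*} {m : ℕ}

/-- The point `h` of the fibre of `Fin (m + 2) × α` over the residue class of `k`. -/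
def fibrePoint (m k : ℕ) (h : α) : Fin (m + 2) × α := (Fin.ofNat (m + 2) k, h)

theorem fibrePoint_val (k : Fin (m + 2)) (h : α) : fibrePoint m k h = (k, h) := by
  simp [fibrePoint]

theorem fibrePoint_of_lt {k : ℕ} (hk : k < m + 2) (h : α) : fibrePoint m k h = (⟨k, hk⟩, h) :=
  fibrePoint_val ⟨k, hk⟩ h

theorem fibrePoint_add_period (k : ℕ) (h : α) :
    fibrePoint m (k + (m + 2)) h = fibrePoint m k h := by
  simp [fibrePoint, Fin.ext_iff]

theorem perm_ext_fibrePoint {f f' : Equiv.Perm (Fin (m + 2) × α)}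
    (hff' : ∀ k ≤ m + 1, ∀ h, f (fibrePoint m k h) = f' (fibrePoint m k h)) : f = f' := by
  ext1 ⟨k, h⟩
  simpa only [fibrePoint_val] using hff' k k.is_le h

theorem finRotate_ofNat (k : ℕ) :
    finRotate (m + 2) (Fin.ofNat (m + 2) k) = Fin.ofNat (m + 2) (k + 1) := by
  rw [finRotate_apply]
  simp [Fin.ext_iff, Fin.val_add]

theorem finRotate_pow_ofNat (n k : ℕ) :
    (finRotate (m + 2) ^ n) (Fin.ofNat (m + 2) k) = Fin.ofNat (m + 2) (k + n) := by
  induction n with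
  | zero => rfl
  | succ n ih => rw [pow_succ', Equiv.Perm.mul_apply, ih, finRotate_ofNat, add_assoc]

variable (α m) in
/-- The permutation of `Fin (m + 2) × α` rotating the fibres. -/
def fibreRotation : Equiv.Perm (Fin (m + 2) × α) :=
  (finRotate (m + 2)).prodCongr (Equiv.refl α)

theorem fibreRotation_fibrePoint (k : ℕ) (h : α) :
    fibreRotation α m (fibrePoint m k h) = fibrePoint m (k + 1) h :=
  Prod.ext (finRotate_ofNat k) rfl

theorem fibreRotation_pow_fibrePoint (n k : ℕ) (h : α) :
    (fibreRotation α m ^ n) (fibrePoint m k h) = fibrePoint m (k + n) h := by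
  induction n with
  | zero => rfl
  | succ n ih => rw [pow_succ', Equiv.Perm.mul_apply, ih, fibreRotation_fibrePoint, add_assoc]

theorem fibreRotation_inv_fibrePoint (k : ℕ) (h : α) :
    (fibreRotation α m)⁻¹ (fibrePoint m (k + 1) h) = fibrePoint m k h := by
  rw [Equiv.Perm.inv_eq_iff_eq, fibreRotation_fibrePoint]

theorem fibreRotation_pow_period : fibreRotation α m ^ (m + 2) = 1 :=
  perm_ext_fibrePoint fun k _ h => by
    rw [fibreRotation_pow_fibrePoint, fibrePoint_add_period, Equiv.Perm.one_apply]

end FibrePoint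

variable {G : Type*} [Group G] {m n : ℕ} {s : ℕ → G}

/-- The permutation of `Fin (m + 2) × G` exchanging the first and the last fibre and acting on each
fibre by a left translation. The translations are those by which `w⁻¹ σ_1 w`, where
`w = σ_1 ⋯ σ_g` and `g = m + 1`, acts on the cosets `w ^ (k + 1) * G_A(g)` in `G_M(g)`. -/
def fibreExchange (m : ℕ) (s : ℕ → G) : Equiv.Perm (Fin (m + 2) × G) :=
  (Equiv.swap (Fin.last (m + 1)) 0).prodShear fun k => Equiv.mulLeft <|
    if k.val = 0 then (descProd s m)⁻¹ else if k.val = m + 1 then (ascProd s m)⁻¹ else s (m - k)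

theorem fibreExchange_first (h : G) :
    fibreExchange m s (fibrePoint m 0 h) = fibrePoint m (m + 1) ((descProd s m)⁻¹ * h) := by
  rw [fibrePoint_of_lt (by lia), fibrePoint_of_lt (by lia)]
  exact Prod.ext (Equiv.swap_apply_right _ _) (by simp [fibreExchange])

theorem fibreExchange_last (h : G) :
    fibreExchange m s (fibrePoint m (m + 1) h) = fibrePoint m 0 ((ascProd s m)⁻¹ * h) := by
  rw [fibrePoint_of_lt (by lia), fibrePoint_of_lt (by lia)]
  exact Prod.ext (Equiv.swap_apply_left _ _) (by simp [fibreExchange])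

theorem fibreExchange_middle {k l : ℕ} (hkl : k + l = m) (hk : 0 < k) (h : G) :
    fibreExchange m s (fibrePoint m k h) = fibrePoint m k (s l * h) := by
  have hlast : k ≠ m + 1 := by lia
  have hl : m - k = l := by lia
  rw [fibrePoint_of_lt (by lia), fibrePoint_of_lt (by lia)]
  exact Prod.ext (Equiv.swap_apply_of_ne_of_ne (Fin.ne_of_val_ne hlast) (Fin.ne_of_val_ne hk.ne'))
    (by simp [fibreExchange, hk.ne', hlast, hl])

theorem rot_mul_fibreExchange_first (h : G) :
    (fibreRotation G m * fibreExchange m s) (fibrePoint m 0 h)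
      = fibrePoint m 0 ((descProd s m)⁻¹ * h) := by
  rw [Equiv.Perm.mul_apply, fibreExchange_first, fibreRotation_fibrePoint,
    ← fibrePoint_add_period 0, zero_add]

theorem rot_mul_fibreExchange_last (h : G) :
    (fibreRotation G m * fibreExchange m s) (fibrePoint m (m + 1) h)
      = fibrePoint m 1 ((ascProd s m)⁻¹ * h) := by
  rw [Equiv.Perm.mul_apply, fibreExchange_last, fibreRotation_fibrePoint]

theorem rot_mul_fibreExchange_pow_first (n : ℕ) (h : G) :
    ((fibreRotation G m * fibreExchange m s) ^ n) (fibrePoint m 0 h)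
      = fibrePoint m 0 ((descProd s m ^ n)⁻¹ * h) := by
  induction n with
  | zero => simp
  | succ n ih =>
    rw [pow_succ', Equiv.Perm.mul_apply, ih, rot_mul_fibreExchange_first, pow_succ, mul_inv_rev,
      mul_assoc]

theorem rot_mul_fibreExchange_pow_one {k l : ℕ} (hkl : k + l = m) (h : G) :
    ((fibreRotation G m * fibreExchange m s) ^ k) (fibrePoint m 1 h)
      = fibrePoint m (k + 1) ((ascProd s l)⁻¹ * (ascProd s m * h)) := by
  induction k generalizing l with
  | zero => simp [← hkl]
  | succ k ih =>
    rw [pow_succ', Equiv.Perm.mul_apply, ih (l := l + 1) (by lia), Equiv.Perm.mul_apply,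
      fibreExchange_middle (l := l) (by lia) k.succ_pos, fibreRotation_fibrePoint, ascProd_succ,
      mul_inv_rev, mul_assoc, mul_inv_cancel_left]

theorem rot_mul_fibreExchange_pow_period (hD : descProd s m ^ (m + 1) = 1) :
    (fibreRotation G m * fibreExchange m s) ^ (m + 1) = 1 := by
  refine perm_ext_fibrePoint fun j hj h => ?_
  rcases j with _ | k
  · rw [rot_mul_fibreExchange_pow_first, hD, inv_one, one_mul, Equiv.Perm.one_apply]
  · obtain ⟨l, hkl⟩ : ∃ l, k + l = m := ⟨m - k, by lia⟩
    have horbit : fibrePoint m (k + 1) h = ((fibreRotation G m * fibreExchange m s) ^ k)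
        (fibrePoint m 1 ((ascProd s m)⁻¹ * (ascProd s l * h))) := by
      rw [rot_mul_fibreExchange_pow_one hkl, mul_inv_cancel_left, inv_mul_cancel_left]
    rw [horbit, ← Equiv.Perm.mul_apply, ((Commute.refl _).pow_pow _ _).eq, Equiv.Perm.mul_apply,
      pow_succ', Equiv.Perm.mul_apply, rot_mul_fibreExchange_pow_one (add_zero m),
      rot_mul_fibreExchange_last, ascProd_zero, inv_one, one_mul, inv_mul_cancel_left,
      Equiv.Perm.one_apply]

theorem inv_rot_mul_fibreExchange_first (h : G) :
    ((fibreRotation G m)⁻¹ * fibreExchange m s) (fibrePoint m 0 h)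
      = fibrePoint m m ((descProd s m)⁻¹ * h) := by
  rw [Equiv.Perm.mul_apply, fibreExchange_first, fibreRotation_inv_fibrePoint]

theorem inv_rot_mul_fibreExchange_last (h : G) :
    ((fibreRotation G m)⁻¹ * fibreExchange m s) (fibrePoint m (m + 1) h)
      = fibrePoint m (m + 1) ((ascProd s m)⁻¹ * h) := by
  rw [Equiv.Perm.mul_apply, fibreExchange_last, ← fibrePoint_add_period 0, zero_add,
    fibreRotation_inv_fibrePoint]

theorem inv_rot_mul_fibreExchange_pow_last (n : ℕ) (h : G) :
    (((fibreRotation G m)⁻¹ * fibreExchange m s) ^ n) (fibrePoint m (m + 1) h)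
      = fibrePoint m (m + 1) ((ascProd s m ^ n)⁻¹ * h) := by
  induction n with
  | zero => simp
  | succ n ih =>
    rw [pow_succ', Equiv.Perm.mul_apply, ih, inv_rot_mul_fibreExchange_last, pow_succ, mul_inv_rev,
      mul_assoc]

theorem inv_rot_mul_fibreExchange_pow {k l : ℕ} (hkl : k + l = m) (h : G) :
    (((fibreRotation G m)⁻¹ * fibreExchange m s) ^ k) (fibrePoint m m h)
      = fibrePoint m l (descProd s k * h) := by
  induction k generalizing l with
  | zero => simp [← hkl]
  | succ k ih =>
    rw [pow_succ', Equiv.Perm.mul_apply, ih (l := l + 1) (by lia), Equiv.Perm.mul_apply,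
      fibreExchange_middle (l := k) (by lia) l.succ_pos, fibreRotation_inv_fibrePoint,
      descProd_succ, mul_assoc]

theorem inv_rot_mul_fibreExchange_pow_period (hP : ascProd s m ^ (m + 1) = 1) :
    ((fibreRotation G m)⁻¹ * fibreExchange m s) ^ (m + 1) = 1 := by
  refine perm_ext_fibrePoint fun j hj h => ?_
  rcases hj.lt_or_eq with hj | rfl
  · obtain ⟨k, hkj⟩ : ∃ k, k + j = m := ⟨m - j, by lia⟩
    have horbit : fibrePoint m j h = (((fibreRotation G m)⁻¹ * fibreExchange m s) ^ k)
        (fibrePoint m m ((descProd s k)⁻¹ * h)) := by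
      rw [inv_rot_mul_fibreExchange_pow hkj, mul_inv_cancel_left]
    rw [horbit, ← Equiv.Perm.mul_apply, ((Commute.refl _).pow_pow _ _).eq, Equiv.Perm.mul_apply,
      pow_succ', Equiv.Perm.mul_apply, inv_rot_mul_fibreExchange_pow (add_zero m),
      inv_rot_mul_fibreExchange_first, inv_mul_cancel_left, Equiv.Perm.one_apply]
  · rw [inv_rot_mul_fibreExchange_pow_last, hP, inv_one, one_mul, Equiv.Perm.one_apply]

theorem rotConj_fibre_add (i k : ℕ) (h : G) :
    rotConj (fibreRotation G m) (fibreExchange m s) i (fibrePoint m (k + (i + 1)) h)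
      = (fibreRotation G m ^ (i + 1)) (fibreExchange m s (fibrePoint m k h)) := by
  rw [← fibreRotation_pow_fibrePoint (i + 1) k, rotConj, Equiv.Perm.mul_apply, Equiv.Perm.mul_apply,
    Equiv.Perm.coe_inv, Equiv.symm_apply_apply]

theorem rotConj_fibre_succ (i : ℕ) (h : G) :
    rotConj (fibreRotation G m) (fibreExchange m s) i (fibrePoint m (i + 1) h)
      = fibrePoint m i ((descProd s m)⁻¹ * h) := by
  rw [← zero_add (i + 1), rotConj_fibre_add, fibreExchange_first, fibreRotation_pow_fibrePoint,
    ← fibrePoint_add_period i, show m + 1 + (i + 1) = i + (m + 2) by lia]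

theorem rotConj_fibre_self (i : ℕ) (h : G) :
    rotConj (fibreRotation G m) (fibreExchange m s) i (fibrePoint m i h)
      = fibrePoint m (i + 1) ((ascProd s m)⁻¹ * h) := by
  rw [← fibrePoint_add_period i, show i + (m + 2) = m + 1 + (i + 1) by lia, rotConj_fibre_add,
    fibreExchange_last, fibreRotation_pow_fibrePoint, zero_add]

theorem rotConj_fibre_above {i j b : ℕ} (hj : i + 1 < j) (hjb : j + b = m + i + 1) (h : G) :
    rotConj (fibreRotation G m) (fibreExchange m s) i (fibrePoint m j h)
      = fibrePoint m j (s b * h) := by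
  obtain ⟨k, rfl⟩ : ∃ k, j = k + (i + 1) := ⟨j - (i + 1), by lia⟩
  rw [rotConj_fibre_add, fibreExchange_middle (l := b) (by lia) (by lia),
    fibreRotation_pow_fibrePoint]

theorem rotConj_fibre_below {i j b : ℕ} (hi : i ≤ m) (hjb : j + b + 1 = i) (h : G) :
    rotConj (fibreRotation G m) (fibreExchange m s) i (fibrePoint m j h)
      = fibrePoint m j (s b * h) := by
  obtain ⟨k, hk⟩ : ∃ k, j + (m + 2) = k + (i + 1) := ⟨j + (m + 2) - (i + 1), by lia⟩
  rw [← fibrePoint_add_period j, hk, rotConj_fibre_add,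
    fibreExchange_middle (l := b) (by lia) (by lia), fibreRotation_pow_fibrePoint, ← hk,
    fibrePoint_add_period]

theorem rotConj_fibre_last {i : ℕ} (hi : i < m) (h : G) :
    rotConj (fibreRotation G m) (fibreExchange m s) i (Fin.last (m + 1), h)
      = (Fin.last (m + 1), s i * h) := by
  rw [← fibrePoint_val, ← fibrePoint_val, Fin.val_last]
  exact rotConj_fibre_above (by lia) (by lia) h

namespace IsBraidSeq

theorem mul_inv_ascProd (h : IsBraidSeq s n) {i : ℕ} (hi : i + 1 < n) :
    s i * (ascProd s n)⁻¹ = (ascProd s n)⁻¹ * s (i + 1) := by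
  rw [mul_inv_eq_iff_eq_mul, mul_assoc, eq_inv_mul_iff_mul_eq, h.ascProd_mul hi]

theorem mul_inv_descProd (h : IsBraidSeq s n) {i : ℕ} (hi : i + 1 < n) :
    s (i + 1) * (descProd s n)⁻¹ = (descProd s n)⁻¹ * s i := by
  rw [mul_inv_eq_iff_eq_mul, mul_assoc, eq_inv_mul_iff_mul_eq, h.descProd_mul hi]

theorem commute_fibreExchange_rotConj (hs : IsBraidSeq s m) {i : ℕ} (hi : i + 1 < m) :
    Commute (fibreExchange m s) (rotConj (fibreRotation G m) (fibreExchange m s) (i + 1)) := by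
  refine perm_ext_fibrePoint fun j hj h => ?_
  simp only [Equiv.Perm.mul_apply]
  rcases j.eq_zero_or_pos with rfl | hj0
  · rw [fibreExchange_first, rotConj_fibre_above (j := m + 1) (b := i + 1) (by lia) (by lia),
      rotConj_fibre_below (j := 0) (b := i) (by lia) (by lia), fibreExchange_first, ← mul_assoc,
      ← hs.mul_inv_descProd hi, mul_assoc]
  rcases hj.eq_or_lt with rfl | hjm
  · rw [fibreExchange_last, rotConj_fibre_below (j := 0) (b := i) (by lia) (by lia),
      rotConj_fibre_above (j := m + 1) (b := i + 1) (by lia) (by lia), fibreExchange_last,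
      ← mul_assoc, ← hs.mul_inv_ascProd hi, mul_assoc]
  obtain ⟨l, hjl⟩ : ∃ l, j + l = m := ⟨m - j, by lia⟩
  rw [fibreExchange_middle hjl hj0]
  obtain hji | rfl | rfl | hij : j ≤ i ∨ j = i + 1 ∨ j = i + 1 + 1 ∨ i + 2 < j := by lia
  · obtain ⟨b, hjb⟩ : ∃ b, j + b + 1 = i + 1 := ⟨i - j, by lia⟩
    rw [rotConj_fibre_below (by lia) hjb, rotConj_fibre_below (by lia) hjb,
      fibreExchange_middle hjl hj0, ← mul_assoc, ← hs.comm (i := b) (j := l) (by lia) (by lia),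
      mul_assoc]
  · obtain ⟨l, rfl⟩ : ∃ k, l = k + 1 := ⟨l - 1, by lia⟩
    rw [rotConj_fibre_self, rotConj_fibre_self, fibreExchange_middle (l := l) (by lia) (by lia),
      ← mul_assoc, ← mul_assoc, hs.mul_inv_ascProd (by lia)]
  · rw [rotConj_fibre_succ, rotConj_fibre_succ, fibreExchange_middle (l := l + 1) (by lia) (by lia),
      ← mul_assoc, ← mul_assoc, hs.mul_inv_descProd (by lia)]
  · obtain ⟨b, hjb⟩ : ∃ b, j + b = m + (i + 1) + 1 := ⟨m + (i + 1) + 1 - j, by lia⟩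
    rw [rotConj_fibre_above hij hjb, rotConj_fibre_above hij hjb, fibreExchange_middle hjl hj0,
      ← mul_assoc, hs.comm (i := l) (j := b) (by lia) (by lia), mul_assoc]

theorem inv_descProd_mul_last_mul_inv_ascProd (hs : IsBraidSeq s (n + 1)) :
    (descProd s (n + 1))⁻¹ * s n * (ascProd s (n + 1))⁻¹
      = (ascProd s (n + 1))⁻¹ * s 0 * (descProd s (n + 1))⁻¹ := by
  have hinv := congrArg (·⁻¹) (hs.ascProd_mul_descProd n.lt_succ_self)
  have hD : (descProd s (n + 1))⁻¹ * s n = (descProd s n)⁻¹ := by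
    rw [descProd_succ, mul_inv_rev, inv_mul_cancel_right]
  simpa [hD, mul_assoc] using hinv

theorem braid_fibreExchange_rotConj (hs : IsBraidSeq s (n + 1))
    (hP : ascProd s (n + 1) ^ (n + 2) = 1) :
    fibreExchange (n + 1) s * rotConj (fibreRotation G (n + 1)) (fibreExchange (n + 1) s) 0
        * fibreExchange (n + 1) s
      = rotConj (fibreRotation G (n + 1)) (fibreExchange (n + 1) s) 0 * fibreExchange (n + 1) s
        * rotConj (fibreRotation G (n + 1)) (fibreExchange (n + 1) s) 0 := by
  have hD : descProd s (n + 1) ^ (n + 2) = 1 := hs.ascProd_pow_eq_descProd_pow.symm.trans hP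
  refine perm_ext_fibrePoint fun j hj h => ?_
  simp only [Equiv.Perm.mul_apply]
  obtain rfl | rfl | rfl | ⟨hj1, hjn⟩ :
    j = 0 ∨ j = 0 + 1 ∨ j = n + 1 + 1 ∨ 0 + 1 < j ∧ j ≤ n + 1 := by lia
  · rw [fibreExchange_first, rotConj_fibre_above (j := n + 1 + 1) (b := 0) (by lia) (by lia),
      fibreExchange_last, rotConj_fibre_self, fibreExchange_middle (l := n) (by lia) (by lia),
      rotConj_fibre_succ]
    simp only [← mul_assoc, hs.inv_descProd_mul_last_mul_inv_ascProd]
  · rw [fibreExchange_middle (l := n) (by lia) (by lia), rotConj_fibre_succ, rotConj_fibre_succ,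
      fibreExchange_first, fibreExchange_first,
      rotConj_fibre_above (j := n + 1 + 1) (b := 0) (by lia) (by lia)]
    simpa [pow_two, mul_assoc] using
      congrArg (fun x => fibrePoint (n + 1) (n + 2) (x * h)) (hs.inv_descProd_sq_mul hD)
  · rw [fibreExchange_last, rotConj_fibre_self,
      rotConj_fibre_above (j := n + 1 + 1) (b := 0) (by lia) (by lia),
      fibreExchange_middle (l := n) (by lia) (by lia), fibreExchange_last, rotConj_fibre_self]
    simpa [pow_two, mul_assoc] using
      congrArg (fun x => fibrePoint (n + 1) 1 (x * h)) (hs.inv_ascProd_sq_mul hP).symm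
  · obtain ⟨l, hjl⟩ : ∃ l, j + l = n + 1 := ⟨n + 1 - j, by lia⟩
    have hjb : j + (l + 1) = n + 1 + 0 + 1 := by lia
    simp only [fibreExchange_middle hjl (zero_lt_one.trans hj1), rotConj_fibre_above hj1 hjb,
      ← mul_assoc, hs.braid (i := l) (by lia)]

theorem isRotationPair_fibre (hs : IsBraidSeq s m) (hP : ascProd s m ^ (m + 1) = 1) :
    IsRotationPair (m + 1) (fibreRotation G m) (fibreExchange m s) where
  rot_pow := fibreRotation_pow_period
  rot_mul_pow := rot_mul_fibreExchange_pow_period (hs.ascProd_pow_eq_descProd_pow.symm.trans hP)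
  inv_rot_mul_pow := inv_rot_mul_fibreExchange_pow_period hP
  comm k hk hkm := by
    obtain ⟨i, rfl⟩ : ∃ i, k = i + 1 + 1 := ⟨k - 2, by lia⟩
    exact hs.commute_fibreExchange_rotConj (by lia)
  braid hm := by
    obtain ⟨n, rfl⟩ : ∃ n, m = n + 1 := ⟨m - 1, by lia⟩
    simpa [rotConj] using hs.braid_fibreExchange_rotConj hP

end IsBraidSeq

end MonomialRotationPair

theorem isRotationPair_finRotate_swap (m : ℕ) :
    IsRotationPair (m + 1) (finRotate (m + 2)) (Equiv.swap (Fin.last (m + 1)) 0) := by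
  have htrivial : IsBraidSeq (fun _ => (1 : Unit)) m := ⟨fun _ _ _ _ => rfl, fun _ _ => rfl⟩
  exact (htrivial.isRotationPair_fibre rfl).map (Equiv.prodPUnit _).permCongrHom.toMonoidHom

theorem finRotate_pow_zero {m : ℕ} (k : Fin (m + 2)) : (finRotate (m + 2) ^ k.val) 0 = k :=
  (finRotate_pow_ofNat k 0).trans (by simp)

theorem finRotate_pow_last {m : ℕ} (k : Fin (m + 2)) :
    (finRotate (m + 2) ^ (k.val + 1)) (Fin.last (m + 1)) = k := by
  rw [pow_succ, Equiv.Perm.mul_apply, finRotate_last, finRotate_pow_zero]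

theorem rotConj_finRotate_swap {m : ℕ} (i : Fin (m + 1)) :
    rotConj (finRotate (m + 2)) (Equiv.swap (Fin.last (m + 1)) 0) i
      = Equiv.swap i.castSucc i.succ := by
  rw [rotConj, ← Equiv.swap_apply_apply]
  exact congrArg₂ Equiv.swap (finRotate_pow_last i.castSucc) (finRotate_pow_zero i.succ)

section ArtinPresentations

variable {G : Type*} [Group G] {n : ℕ}

theorem lift_prod_ofFn_of (s : ℕ → G) (n : ℕ) :
    FreeGroup.lift (fun i : Fin n => s i) (List.ofFn fun i : Fin n => FreeGroup.of i).prod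
      = ascProd s n := by
  rw [map_list_prod, List.map_ofFn, ascProd, ← list_ofFn_eq_map_range]
  simp [Function.comp_def]

theorem lift_prod_reverse_ofFn_of (s : ℕ → G) (n : ℕ) :
    FreeGroup.lift (fun i : Fin n => s i) (List.ofFn fun i : Fin n => FreeGroup.of i).reverse.prod
      = descProd s n := by
  rw [map_list_prod, List.map_reverse, List.map_ofFn, descProd, ← list_ofFn_eq_map_range]
  simp [Function.comp_def]

open FreeGroup in
/-- Artin's relations of the braid group on `n + 1` strands, in the form in which `relsA` and
`relsM` contain them. -/
def braidRels (n : ℕ) : Set (FreeGroup (Fin n)) :=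
  {r | ∃ j k : Fin n, ((j : ℕ) + 1 < k ∨ (k : ℕ) + 1 < j) ∧
        r = of k * of j * (of j * of k)⁻¹} ∪
  {r | ∃ j k : Fin n, (j : ℕ) + 1 = k ∧
        r = of j * of k * of j * (of k * of j * of k)⁻¹}

theorem forall_braidRels_lift_eq_one_iff {s : ℕ → G} :
    (∀ r ∈ braidRels n, FreeGroup.lift (fun i : Fin n => s i) r = 1) ↔ IsBraidSeq s n := by
  refine ⟨fun h => ⟨fun i j hij hj => ?_, fun i hi => ?_⟩, fun h => ?_⟩
  · have hr := h _ (Or.inl ⟨⟨j, hj⟩, ⟨i, by lia⟩, Or.inr hij, rfl⟩)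
    simpa [← mul_inv_rev, mul_inv_eq_one] using hr
  · have hr := h _ (Or.inr ⟨⟨i, by lia⟩, ⟨i + 1, hi⟩, rfl, rfl⟩)
    simpa [← mul_inv_rev, ← mul_assoc, mul_inv_eq_one] using hr
  · rintro r (⟨j, k, hjk | hkj, rfl⟩ | ⟨j, k, hjk, rfl⟩)
    · simp [← h.comm hjk k.is_lt]
    · simp [h.comm hkj j.is_lt]
    · have hbraid := h.braid (hjk.trans_lt k.is_lt)
      simp [← hjk, hbraid]

theorem forall_relsA_lift_eq_one_iff {g : ℕ} {s : ℕ → G} :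
    (∀ r ∈ relsA g, FreeGroup.lift (fun i : Fin (g - 1) => s i) r = 1) ↔
      IsBraidSeq s (g - 1) ∧ ascProd s (g - 1) ^ g = 1 := by
  rw [← forall_braidRels_lift_eq_one_iff, ← lift_prod_ofFn_of, ← map_pow]
  simp only [relsA, braidRels, Set.union_singleton, Set.forall_mem_insert, and_comm]

theorem forall_relsM_lift_eq_one_iff {g : ℕ} {s : ℕ → G} :
    (∀ r ∈ relsM g, FreeGroup.lift (fun i : Fin g => s i) r = 1) ↔
      IsBraidSeq s g ∧ ascProd s g * descProd s g = 1 ∧ ascProd s g ^ (g + 1) = 1 := by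
  rw [← forall_braidRels_lift_eq_one_iff, ← lift_prod_ofFn_of, ← lift_prod_reverse_ofFn_of,
    ← map_pow, ← map_mul]
  simp only [relsM, braidRels, Set.union_singleton, Set.forall_mem_insert]
  tauto

/-- The generators of a presented group with finitely many generators as a sequence, extended by
`1`. -/
noncomputable def presentedGen (rels : Set (FreeGroup (Fin n))) : ℕ → PresentedGroup rels :=
  Function.extend Fin.val PresentedGroup.of 1

theorem presentedGen_val (rels : Set (FreeGroup (Fin n))) (i : Fin n) :
    presentedGen rels i = PresentedGroup.of i :=
  Fin.val_injective.extend_apply _ _ i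

theorem lift_presentedGen (rels : Set (FreeGroup (Fin n))) :
    FreeGroup.lift (fun i : Fin n => presentedGen rels i) = PresentedGroup.mk rels :=
  FreeGroup.ext_hom _ _ fun i => by
    rw [FreeGroup.lift_apply_of, presentedGen_val]
    rfl

theorem lift_presentedGen_eq_one {rels : Set (FreeGroup (Fin n))} {r : FreeGroup (Fin n)}
    (hr : r ∈ rels) : FreeGroup.lift (fun i : Fin n => presentedGen rels i) r = 1 := by
  rw [lift_presentedGen, PresentedGroup.one_of_mem hr]

theorem closure_presentedGen (rels : Set (FreeGroup (Fin n))) :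
    Subgroup.closure (presentedGen rels '' Set.Iio n) = ⊤ := by
  rw [eq_top_iff, ← PresentedGroup.closure_range_of rels]
  refine Subgroup.closure_mono ?_
  rintro _ ⟨i, rfl⟩
  exact ⟨i, i.is_lt, presentedGen_val rels i⟩

end ArtinPresentations

namespace GA

variable {G : Type*} [Group G] {g : ℕ} {s : ℕ → G}

/-- The generators `σ_1, …, σ_{g-1}` of `GA g`, counted from `0`. -/
noncomputable def gen (g : ℕ) : ℕ → GA g := presentedGen (relsA g)

theorem gen_val (i : Fin (g - 1)) : gen g i = PresentedGroup.of i := presentedGen_val _ i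

theorem closure_gen (g : ℕ) : Subgroup.closure (gen g '' Set.Iio (g - 1)) = ⊤ :=
  closure_presentedGen (relsA g)

theorem isBraidSeq_gen (g : ℕ) : IsBraidSeq (gen g) (g - 1) :=
  (forall_relsA_lift_eq_one_iff.mp fun _ => lift_presentedGen_eq_one).1

theorem ascProd_gen_pow (g : ℕ) : ascProd (gen g) (g - 1) ^ g = 1 :=
  (forall_relsA_lift_eq_one_iff.mp fun _ => lift_presentedGen_eq_one).2

/-- The homomorphism out of `GA g` with prescribed images of the generators. -/
def lift (hs : IsBraidSeq s (g - 1)) (hpow : ascProd s (g - 1) ^ g = 1) : GA g →* G :=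
  PresentedGroup.toGroup (forall_relsA_lift_eq_one_iff.mpr ⟨hs, hpow⟩)

theorem lift_gen (hs : IsBraidSeq s (g - 1)) (hpow : ascProd s (g - 1) ^ g = 1) {i : ℕ}
    (hi : i < g - 1) : lift hs hpow (gen g i) = s i := by
  rw [gen_val ⟨i, hi⟩]
  exact PresentedGroup.toGroup.of (forall_relsA_lift_eq_one_iff.mpr ⟨hs, hpow⟩)

end GA

namespace GM

variable {G : Type*} [Group G] {g : ℕ}

/-- The generators `σ_1, …, σ_g` of `GM g`, counted from `0`. -/
noncomputable def gen (g : ℕ) : ℕ → GM g := presentedGen (relsM g)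

theorem gen_val (i : Fin g) : gen g i = PresentedGroup.of i := presentedGen_val _ i

theorem closure_gen (g : ℕ) : Subgroup.closure (gen g '' Set.Iio g) = ⊤ :=
  closure_presentedGen (relsM g)

theorem isBraidSeq_gen (g : ℕ) : IsBraidSeq (gen g) g :=
  (forall_relsM_lift_eq_one_iff.mp fun _ => lift_presentedGen_eq_one).1

theorem ascProd_gen_mul_descProd_gen (g : ℕ) : ascProd (gen g) g * descProd (gen g) g = 1 :=
  (forall_relsM_lift_eq_one_iff.mp fun _ => lift_presentedGen_eq_one).2.1

theorem ascProd_gen_pow (g : ℕ) : ascProd (gen g) g ^ (g + 1) = 1 :=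
  (forall_relsM_lift_eq_one_iff.mp fun _ => lift_presentedGen_eq_one).2.2

/-- The rotation `σ_1 ⋯ σ_g`, which permutes the punctures cyclically. -/
noncomputable def rot (g : ℕ) : GM g := ascProd (gen g) g

/-- The half twist `w⁻¹ σ_1 w`, where `w = rot g`, exchanging the last puncture with the first
one. -/
noncomputable def exch (g : ℕ) : GM g := (rot g)⁻¹ * gen g 0 * rot g

theorem rot_pow (g : ℕ) : rot g ^ (g + 1) = 1 := ascProd_gen_pow g

theorem inv_rot (g : ℕ) : (rot g)⁻¹ = descProd (gen g) g :=
  inv_eq_of_mul_eq_one_right (ascProd_gen_mul_descProd_gen g)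

theorem rotConj_rot_exch {i : ℕ} (hi : i < g) : rotConj (rot g) (exch g) i = gen g i := by
  have hconj : rot g ^ i * gen g 0 = gen g i * rot g ^ i := by
    have hpow := (isBraidSeq_gen g).ascProd_pow_mul (i := 0) (k := i) (by lia)
    rwa [zero_add] at hpow
  rw [rotConj, exch, mul_inv_eq_iff_eq_mul, pow_succ]
  simp only [mul_assoc, mul_inv_cancel_left]
  rw [← mul_assoc, hconj, mul_assoc]

theorem closure_rot_exch (g : ℕ) : Subgroup.closure {rot g, exch g} = ⊤ := by
  rw [eq_top_iff, ← closure_gen, Subgroup.closure_le]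
  rintro _ ⟨i, hi, rfl⟩
  have hrot : rot g ∈ Subgroup.closure {rot g, exch g} := Subgroup.subset_closure (by simp)
  have hexch : exch g ∈ Subgroup.closure {rot g, exch g} := Subgroup.subset_closure (by simp)
  rw [← rotConj_rot_exch hi, rotConj]
  exact mul_mem (mul_mem (pow_mem hrot _) hexch) (inv_mem (pow_mem hrot _))

variable {w t : G}

/-- The homomorphism out of `GM g` with prescribed images of `rot g` and `exch g`. -/
def liftPair (h : IsRotationPair g w t) : GM g →* G :=
  PresentedGroup.toGroup (f := fun i : Fin g => rotConj w t i) <| forall_relsM_lift_eq_one_iff.mpr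
    ⟨h.isBraidSeq_rotConj, by rw [h.ascProd_rotConj, h.descProd_rotConj, mul_inv_cancel],
      by rw [h.ascProd_rotConj, h.rot_pow]⟩

theorem liftPair_gen (h : IsRotationPair g w t) {i : ℕ} (hi : i < g) :
    liftPair h (gen g i) = rotConj w t i := by
  rw [gen_val ⟨i, hi⟩]
  exact PresentedGroup.toGroup.of (f := fun i : Fin g => rotConj w t i) _

theorem liftPair_rot (h : IsRotationPair g w t) : liftPair h (rot g) = w := by
  rw [rot, map_ascProd, ascProd_congr fun i hi => liftPair_gen h hi, h.ascProd_rotConj]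

theorem liftPair_exch (h : IsRotationPair g w t) (hg : 0 < g) : liftPair h (exch g) = t := by
  simp only [exch, map_mul, map_inv, liftPair_rot, liftPair_gen h hg, rotConj]
  group

theorem exch_mul_rot (m : ℕ) : exch (m + 1) * rot (m + 1) = (descProd (gen (m + 1)) m)⁻¹ := by
  have hP := (isBraidSeq_gen (m + 1)).ascProd_mul_descProd m.lt_succ_self
  rw [← inv_rot, ← rot] at hP
  rw [eq_inv_iff_mul_eq_one, mul_assoc, hP, exch]
  group

theorem exch_eq (m : ℕ) : exch (m + 1) = rot (m + 1) * (ascProd (gen (m + 1)) m)⁻¹ := by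
  have hrot : rot (m + 1) = ascProd (gen (m + 1)) m * gen (m + 1) m := ascProd_succ _ m
  have hrot' : (rot (m + 1))⁻¹ = gen (m + 1) m * descProd (gen (m + 1)) m := by
    rw [inv_rot, descProd_succ]
  rw [eq_mul_inv_iff_mul_eq, eq_mul_inv_of_mul_eq hrot.symm, ← mul_assoc, exch_mul_rot,
    ← mul_inv_rev, ← hrot', inv_inv]

theorem exch_mul_rot_pow {k l : ℕ} (hkl : k + l + 1 = g) :
    exch g * rot g ^ (k + 1) = rot g ^ (k + 1) * gen g l := by
  have hperiod : rot g ^ (k + 1) * rot g ^ (l + 1) = 1 := by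
    rw [← pow_add, ← rot_pow g, ← hkl]
    congr 1
    lia
  rw [← rotConj_rot_exch (by lia : l < g), rotConj, ← mul_assoc, ← mul_assoc, hperiod, one_mul,
    eq_inv_of_mul_eq_one_left hperiod]

theorem ascProd_gen_pred_pow (m : ℕ) : ascProd (gen (m + 1)) m ^ (m + 1) = 1 := by
  have hpow := (isBraidSeq_gen (m + 1)).ascProd_succ_pow
  rwa [← inv_rot, ← rot, eq_mul_inv_iff_mul_eq, ← pow_succ, rot_pow, eq_comm] at hpow

end GM

theorem semiconj_of_closure_eq_top {Γ X Y : Type*} [Group Γ] {S : Set Γ}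
    (hS : Subgroup.closure S = ⊤) {a : Γ →* Equiv.Perm X} {b : Γ →* Equiv.Perm Y} {F : X → Y}
    (h : ∀ γ ∈ S, Function.Semiconj F (a γ) (b γ)) (γ : Γ) :
    Function.Semiconj F (a γ) (b γ) := by
  have hγ : γ ∈ Subgroup.closure S := hS ▸ Subgroup.mem_top γ
  induction hγ using Subgroup.closure_induction with
  | mem γ hγ => exact h γ hγ
  | one => simpa using Function.Semiconj.id_right
  | mul γ δ _ _ hγ hδ => simpa using hγ.comp_right hδ
  | inv γ _ hγ =>
    simpa using hγ.inverses_right (a γ).apply_symm_apply (b γ).symm_apply_apply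

theorem index_comap_stabilizer {Γ X : Type*} [Group Γ] (p : Γ →* Equiv.Perm X) (x : X)
    (htrans : ∀ y, ∃ γ, p γ x = y) :
    ((MulAction.stabilizer (Equiv.Perm X) x).comap p).index = Nat.card X := by
  let := MulAction.compHom X p
  have : MulAction.IsPretransitive Γ X := MulAction.isPretransitive_iff_base x |>.mpr htrans
  exact MulAction.index_stabilizer_of_transitive Γ x

/-- The natural homomorphism, for `g = m + 1`. -/
noncomputable def GA.toGM (m : ℕ) : GA (m + 1) →* GM (m + 1) :=
  GA.lift ((GM.isBraidSeq_gen (m + 1)).mono m.le_succ) (GM.ascProd_gen_pred_pow m)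

theorem GA.toGM_gen {m i : ℕ} (hi : i < m) : GA.toGM m (GA.gen (m + 1) i) = GM.gen (m + 1) i :=
  GA.lift_gen _ _ hi

theorem GA.toGM_ascProd_gen (m : ℕ) :
    GA.toGM m (ascProd (GA.gen (m + 1)) m) = ascProd (GM.gen (m + 1)) m := by
  rw [map_ascProd, ascProd_congr fun i hi => GA.toGM_gen hi]

theorem GA.toGM_descProd_gen (m : ℕ) :
    GA.toGM m (descProd (GA.gen (m + 1)) m) = descProd (GM.gen (m + 1)) m := by
  rw [map_descProd, descProd_congr fun i hi => GA.toGM_gen hi]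

/-- The action on the punctures: the homomorphism `p` for `g = m + 1`. -/
def GM.toPerm (m : ℕ) : GM (m + 1) →* Equiv.Perm (Fin (m + 2)) :=
  GM.liftPair (isRotationPair_finRotate_swap m)

/-- The action of `GM (m + 1)` by left multiplication on itself, transported to
`Fin (m + 2) × GA (m + 1)` along `GM.ofFibre`. -/
noncomputable def GM.fibreAction (m : ℕ) : GM (m + 1) →* Equiv.Perm (Fin (m + 2) × GA (m + 1)) :=
  GM.liftPair ((GA.isBraidSeq_gen (m + 1)).isRotationPair_fibre (GA.ascProd_gen_pow (m + 1)))

/-- The parametrization `(k, h) ↦ w ^ (k + 1) * h`, where `w = GM.rot (m + 1)`, of `GM (m + 1)` by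
the cosets of the image of `GA (m + 1)`. -/
noncomputable def GM.ofFibre (m : ℕ) (x : Fin (m + 2) × GA (m + 1)) : GM (m + 1) :=
  GM.rot (m + 1) ^ (x.1.val + 1) * GA.toGM m x.2

namespace GM

theorem toPerm_gen {m : ℕ} (i : Fin (m + 1)) :
    toPerm m (gen (m + 1) i) = Equiv.swap i.castSucc i.succ := by
  rw [toPerm, liftPair_gen _ i.is_lt, rotConj_finRotate_swap]

theorem ofFibre_fibrePoint (m k : ℕ) (h : GA (m + 1)) :
    ofFibre m (fibrePoint m k h) = rot (m + 1) ^ (k + 1) * GA.toGM m h := by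
  rw [pow_succ, pow_eq_pow_mod k (rot_pow (m + 1)), ← pow_succ]
  rfl

theorem ofFibre_last (m : ℕ) (h : GA (m + 1)) : ofFibre m (Fin.last (m + 1), h) = GA.toGM m h := by
  rw [ofFibre, Fin.val_last, rot_pow, one_mul]

theorem ofFibre_fibreRotation (m : ℕ) (x : Fin (m + 2) × GA (m + 1)) :
    ofFibre m (fibreRotation _ m x) = rot (m + 1) * ofFibre m x := by
  obtain ⟨k, h⟩ := x
  rw [← fibrePoint_val, fibreRotation_fibrePoint, ofFibre_fibrePoint, ofFibre_fibrePoint,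
    pow_succ', mul_assoc]

theorem ofFibre_fibreExchange (m : ℕ) (x : Fin (m + 2) × GA (m + 1)) :
    ofFibre m (fibreExchange m (GA.gen (m + 1)) x) = exch (m + 1) * ofFibre m x := by
  obtain ⟨⟨k, hk⟩, h⟩ := x
  rw [← fibrePoint_of_lt hk, ofFibre_fibrePoint]
  obtain rfl | rfl | ⟨hk0, hkm⟩ : k = 0 ∨ k = m + 1 ∨ 0 < k ∧ k ≤ m := by lia
  · rw [fibreExchange_first, ofFibre_fibrePoint, rot_pow, one_mul, map_mul, map_inv,
      GA.toGM_descProd_gen, zero_add, pow_one, ← mul_assoc, exch_mul_rot]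
  · rw [fibreExchange_last, ofFibre_fibrePoint, rot_pow, one_mul, map_mul, map_inv,
      GA.toGM_ascProd_gen, zero_add, pow_one, ← mul_assoc, exch_eq]
  · obtain ⟨l, rfl⟩ : ∃ l, k + l = m := ⟨m - k, by lia⟩
    rw [fibreExchange_middle rfl hk0, ofFibre_fibrePoint, map_mul, GA.toGM_gen (by lia),
      ← mul_assoc, ← mul_assoc, exch_mul_rot_pow rfl]

theorem ofFibre_fibreAction {m : ℕ} (γ : GM (m + 1)) (x : Fin (m + 2) × GA (m + 1)) :
    ofFibre m (fibreAction m γ x) = γ * ofFibre m x := by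
  refine semiconj_of_closure_eq_top (closure_rot_exch (m + 1)) (a := fibreAction m)
    (b := MulAction.toPermHom _ _) ?_ γ x
  rintro _ (rfl | rfl)
  · rw [fibreAction, liftPair_rot]
    exact ofFibre_fibreRotation m
  · rw [fibreAction, liftPair_exch _ m.succ_pos]
    exact ofFibre_fibreExchange m

theorem fst_fibreAction {m : ℕ} (γ : GM (m + 1)) (x : Fin (m + 2) × GA (m + 1)) :
    (fibreAction m γ x).1 = toPerm m γ x.1 := by
  refine semiconj_of_closure_eq_top (closure_rot_exch (m + 1)) (a := fibreAction m)
    (b := toPerm m) (F := Prod.fst) ?_ γ x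
  rintro _ (rfl | rfl)
  · rw [fibreAction, toPerm, liftPair_rot, liftPair_rot]
    exact fun _ => rfl
  · rw [fibreAction, toPerm, liftPair_exch _ m.succ_pos, liftPair_exch _ m.succ_pos]
    exact fun _ => rfl

theorem fibreAction_toGM {m : ℕ} (c h : GA (m + 1)) :
    fibreAction m (GA.toGM m c) (Fin.last (m + 1), h) = (Fin.last (m + 1), c * h) := by
  refine (semiconj_of_closure_eq_top (GA.closure_gen (m + 1)) (a := MulAction.toPermHom _ _)
    (b := (fibreAction m).comp (GA.toGM m)) (F := fun h => (Fin.last (m + 1), h)) ?_ c h).symm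
  rintro _ ⟨i, hi, rfl⟩ h
  change i < m at hi
  rw [MonoidHom.comp_apply, GA.toGM_gen hi, fibreAction, liftPair_gen _ (hi.trans m.lt_succ_self)]
  exact (rotConj_fibre_last hi h).symm

theorem exists_toPerm_last_eq {m : ℕ} (k : Fin (m + 2)) :
    ∃ γ, toPerm m γ (Fin.last (m + 1)) = k :=
  ⟨rot (m + 1) ^ (k.val + 1), by rw [toPerm, map_pow, liftPair_rot, finRotate_pow_last]⟩

end GM

namespace GA

theorem toGM_injective (m : ℕ) : Function.Injective (toGM m) := fun c c' h => by
  simpa [GM.fibreAction_toGM] using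
    congrArg (fun γ => GM.fibreAction m γ (Fin.last (m + 1), 1)) h

theorem range_toGM (m : ℕ) :
    (toGM m).range = (MulAction.stabilizer (Equiv.Perm (Fin (m + 2))) (Fin.last (m + 1))).comap
      (GM.toPerm m) := by
  ext γ
  rw [Subgroup.mem_comap, MulAction.mem_stabilizer_iff, Equiv.Perm.smul_def]
  constructor
  · rintro ⟨c, rfl⟩
    rw [← GM.fst_fibreAction (toGM m c) (Fin.last (m + 1), 1), GM.fibreAction_toGM]
  · intro hγ
    have hfst := (GM.fst_fibreAction γ (Fin.last (m + 1), 1)).trans hγ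
    obtain ⟨c, hc⟩ : ∃ c, GM.fibreAction m γ (Fin.last (m + 1), 1) = (Fin.last (m + 1), c) :=
      ⟨_, Prod.ext hfst rfl⟩
    exact ⟨c, by rw [← GM.ofFibre_last, ← hc, GM.ofFibre_fibreAction, GM.ofFibre_last, map_one,
      mul_one]⟩

theorem index_range_toGM (m : ℕ) : (toGM m).range.index = m + 2 := by
  rw [range_toGM, index_comap_stabilizer _ _ GM.exists_toPerm_last_eq, Nat.card_fin]

end GA

theorem stmt0_general (g : ℕ) (hg : 0 < g) :
    ∃ p : GM g →* Equiv.Perm (Fin (g+1)),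
      (∀ i : Fin g, p (PresentedGroup.of i) = Equiv.swap i.castSucc i.succ) ∧
      ∃ f : GA g →* GM g,
        (∀ i : Fin (g-1), f (PresentedGroup.of i)
            = PresentedGroup.of (Fin.castLE (Nat.sub_le g 1) i)) ∧
        Function.Injective f ∧
        (f.range : Set (GM g)) = ⇑p ⁻¹' {q : Equiv.Perm (Fin (g+1)) | q (Fin.last g) = Fin.last g} ∧
        f.range.index = g + 1 := by
  obtain ⟨m, rfl⟩ : ∃ m, g = m + 1 := ⟨g - 1, by lia⟩
  refine ⟨GM.toPerm m, fun i => ?_, GA.toGM m, fun i => ?_, GA.toGM_injective m, ?_,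
    GA.index_range_toGM m⟩
  · rw [← GM.gen_val, GM.toPerm_gen]
  · exact (congrArg (GA.toGM m) (GA.gen_val i)).symm.trans <|
      (GA.toGM_gen i.is_lt).trans <| GM.gen_val (i.castLE m.le_succ)
  · rw [GA.range_toGM]
    rfl

/-- There is a homomorphism `p : G_M(g) → Sym({1,…,g+1})` with `p(σ_i) = (i, i+1)`;
for `g ≥ 3` the natural homomorphism `G_A(g) → G_M(g)`, `σ_i ↦ σ_i`, is injective and its
image is exactly `p⁻¹(Stab(g+1))`; in particular this image has index `g+1` in `G_M(g)`. -/
theorem stmt0 (g : ℕ) (hg : 3 ≤ g) :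
    ∃ p : GM g →* Equiv.Perm (Fin (g+1)),
      (∀ i : Fin g, p (PresentedGroup.of i) = Equiv.swap i.castSucc i.succ) ∧
      ∃ f : GA g →* GM g,
        (∀ i : Fin (g-1), f (PresentedGroup.of i)
            = PresentedGroup.of (Fin.castLE (Nat.sub_le g 1) i)) ∧
        Function.Injective f ∧
        (f.range : Set (GM g)) = ⇑p ⁻¹' {q : Equiv.Perm (Fin (g+1)) | q (Fin.last g) = Fin.last g} ∧
        f.range.index = g + 1 := by
  exact stmt0_general g (by lia)
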